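/- Assume the Slater condition. Let y₀ ∈ W(0) and let L_{y₀} be the Lagrange process of (P(0)) at y₀. Suppose there exists h₀ ∈ S_{Y_+}(y₀) such that h₀(0,y) > 0 for every y in the topological boundary of Y_+ with y ≠ 0. Then y₀ is a minimal point of the program (P(0)) if and only if y₀ is a minimal point of the program (D_{L_{y₀}}). -/

import Mathlib

/-!
Write a separating functional as `h = (ζ, φ)`, with `ζ` on `Z` and `φ` on `Y`. Both parts are
nonnegative on the ordering cones, and `φ y₀ ≤ ζ (g x) + φ (f x)` for all `x ∈ Ω`
(`sepSet_nonneg_left`, `sepSet_nonneg_right`, `sepSet_le`).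

The positivity of `h₀ = (ζ₀, φ₀)` on the nonzero boundary points of `Y₊` extends to all of `Y₊ \ {0}`: the
Slater condition excludes `φ₀ = 0`, and a nonzero functional that is nonnegative on a set is positive
on its interior (`pos_of_mem_interior`, `sepSet_pos`). Moreover `φ₀ ≥ φ₀ y₀` on the feasible
values of the primal and of the dual program. A feasible value `y` with `y₀ - y ∈ Y₊` therefore
equals `y₀`, so that `y₀` is minimal for either program in which it is feasible (`isMinimalPt_of_pos`).
It is feasible for both: if `y₀ = f x₀` with `g x₀ ≤ 0`, complementary slackness `ζ (g x₀) = 0`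
puts `0` into `L_h (g x₀)` for each separating `h`. Hence both sides of the equivalence hold.
-/

open scoped Classical Pointwise

noncomputable section

/-- A convex cone: a nonempty convex set closed under multiplication by
nonnegative real scalars. -/
def IsConvexCone {E : Type*} [AddCommGroup E] [Module ℝ E] (K : Set E) : Prop :=
  K.Nonempty ∧ Convex ℝ K ∧ ∀ t : ℝ, 0 ≤ t → ∀ k ∈ K, t • k ∈ K

/-- Graph(W_{Y_+}) = {(g x + z₊, f x + y₊) : x ∈ Ω, z₊ ∈ Z_+, y₊ ∈ Y_+}. -/
def GraphW {X Y Z : Type*} [AddCommGroup Y] [AddCommGroup Z]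
    (Ω : Set X) (f : X → Y) (g : X → Z) (Yp : Set Y) (Zp : Set Z) : Set (Z × Y) :=
  {p | ∃ x ∈ Ω, ∃ zp ∈ Zp, ∃ yp ∈ Yp, p = (g x + zp, f x + yp)}

/-- W(0) = {f x : x ∈ Ω, g x ≤ 0}, where g x ≤ 0 means -g x ∈ Z_+. -/
def W0 {X Y Z : Type*} [AddCommGroup Z]
    (Ω : Set X) (f : X → Y) (g : X → Z) (Zp : Set Z) : Set Y :=
  {y | ∃ x ∈ Ω, -g x ∈ Zp ∧ y = f x}

/-- a ∈ A is a minimal point of A: A ∩ (a - Y_+) ⊆ a + Y_+. -/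
def IsMinimalPt {Y : Type*} [AddCommGroup Y]
    (Yp : Set Y) (A : Set Y) (a : Y) : Prop :=
  a ∈ A ∧ ∀ y ∈ A, a - y ∈ Yp → y - a ∈ Yp

/-- a ∈ A is a weak minimal point of A: A ∩ (a - Int Y_+) = ∅. -/
def IsWeakMinimalPt {Y : Type*} [NormedAddCommGroup Y] [NormedSpace ℝ Y]
    (Yp : Set Y) (A : Set Y) (a : Y) : Prop :=
  a ∈ A ∧ ∀ y ∈ A, a - y ∉ interior Yp

/-- The set S_{Y_+}(y₀) of separating functionals: nonzero continuous linear
functionals h on Z × Y with h(z',y') ≤ h(0,y₀) ≤ h(z,y) for all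
(z',y') ∈ (-Z_+) × (y₀ - Y_+) and (z,y) ∈ Graph(W_{Y_+}). -/
def SepSet {X Y Z : Type*} [NormedAddCommGroup Y] [NormedSpace ℝ Y]
    [NormedAddCommGroup Z] [NormedSpace ℝ Z]
    (Ω : Set X) (f : X → Y) (g : X → Z) (Yp : Set Y) (Zp : Set Z) (y₀ : Y) :
    Set ((Z × Y) →L[ℝ] ℝ) :=
  {h | h ≠ 0 ∧ (∀ z' ∈ Zp, ∀ y' ∈ Yp, h (-z', y₀ - y') ≤ h (0, y₀)) ∧
    ∀ p ∈ GraphW Ω f g Yp Zp, h (0, y₀) ≤ h p}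

/-- Graph(L_h), where L_h(z) := {y : h(z,-y) = 0} + Y_+. -/
def GraphLh {Y Z : Type*} [NormedAddCommGroup Y] [NormedSpace ℝ Y]
    [NormedAddCommGroup Z] [NormedSpace ℝ Z]
    (Yp : Set Y) (h : (Z × Y) →L[ℝ] ℝ) : Set (Z × Y) :=
  {p | ∃ y', h (p.1, -y') = 0 ∧ p.2 - y' ∈ Yp}

/-- Graph of the Lagrange process L_{y₀} of (P(0)) at y₀. -/
def GraphLag {X Y Z : Type*} [NormedAddCommGroup Y] [NormedSpace ℝ Y]
    [NormedAddCommGroup Z] [NormedSpace ℝ Z]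
    (Ω : Set X) (f : X → Y) (g : X → Z) (Yp : Set Y) (Zp : Set Z) (y₀ : Y) :
    Set (Z × Y) :=
  if (SepSet Ω f g Yp Zp y₀).Nonempty then
    ⋂ h ∈ SepSet Ω f g Yp Zp y₀, GraphLh Yp h
  else Set.univ

/-- The feasible value set {f x + y : x ∈ Ω, y ∈ L(g x)} of the program (D_L),
for a set-valued map L : Z ⇉ Y given by its graph G. -/
def DSet {X Y Z : Type*} [AddCommGroup Y]
    (Ω : Set X) (f : X → Y) (g : X → Z) (G : Set (Z × Y)) : Set Y :=
  {y | ∃ x ∈ Ω, ∃ y', (g x, y') ∈ G ∧ y = f x + y'}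

/-- B is a base of the cone K: a nonempty convex subset of K with 0 ∉ closure B
such that every nonzero k ∈ K has a unique representation k = t • b, t > 0, b ∈ B. -/
def IsBase {E : Type*} [NormedAddCommGroup E] [NormedSpace ℝ E] (K B : Set E) : Prop :=
  B.Nonempty ∧ Convex ℝ B ∧ B ⊆ K ∧ (0 : E) ∉ closure B ∧
    ∀ k ∈ K, k ≠ 0 → ∃! tb : ℝ × E, 0 < tb.1 ∧ tb.2 ∈ B ∧ k = tb.1 • tb.2

/-- cone(S) = {t • s : t ≥ 0, s ∈ S}. -/
def coneGen {E : Type*} [AddCommGroup E] [Module ℝ E] (S : Set E) : Set E :=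
  {y | ∃ t : ℝ, 0 ≤ t ∧ ∃ s ∈ S, y = t • s}

/-- a is a positive properly efficient point of A. -/
def PosEff {Y : Type*} [NormedAddCommGroup Y] [NormedSpace ℝ Y]
    (Yp A : Set Y) (a : Y) : Prop :=
  a ∈ A ∧ ∃ φ : Y →L[ℝ] ℝ, (∀ y ∈ Yp, y ≠ 0 → 0 < φ y) ∧ ∀ y ∈ A, φ a ≤ φ y

/-- a is a Henig global properly efficient point of A. -/
def GHeEff {Y : Type*} [NormedAddCommGroup Y] [NormedSpace ℝ Y]
    (Yp A : Set Y) (a : Y) : Prop :=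
  a ∈ A ∧ ∃ K : Set Y, Convex ℝ K ∧ (∀ t : ℝ, 0 ≤ t → ∀ k ∈ K, t • k ∈ K) ∧
    (∀ k ∈ K, -k ∈ K → k = 0) ∧ (∀ y ∈ Yp, y ≠ 0 → y ∈ interior K) ∧
    ∀ y ∈ A, y - a ∉ -(interior K)

/-- a is a Henig properly efficient point of A. -/
def HeEff {Y : Type*} [NormedAddCommGroup Y] [NormedSpace ℝ Y]
    (Yp A : Set Y) (a : Y) : Prop :=
  a ∈ A ∧ ∃ B : Set Y, IsBase Yp B ∧ ∃ ε : ℝ, 0 < ε ∧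
    closure (coneGen ((· - a) '' A)) ∩
      -(closure (coneGen (B + ε • Metric.closedBall (0 : Y) 1))) = {0}

/-- a is a super efficient point of A. -/
def SEEff {Y : Type*} [NormedAddCommGroup Y] [NormedSpace ℝ Y]
    (Yp A : Set Y) (a : Y) : Prop :=
  a ∈ A ∧ ∃ ρ : ℝ, 0 < ρ ∧
    closure (coneGen ((· - a) '' A)) ∩ (Metric.closedBall (0 : Y) 1 - Yp) ⊆
      ρ • Metric.closedBall (0 : Y) 1


theorem IsConvexCone.zero_mem {E : Type*} [AddCommGroup E] [Module ℝ E] {K : Set E}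
    (hK : IsConvexCone K) : (0 : E) ∈ K := by
  obtain ⟨k, hk⟩ := hK.1
  simpa using hK.2.2 0 le_rfl k hk

theorem pos_of_mem_interior {E : Type*} [NormedAddCommGroup E] [NormedSpace ℝ E]
    {K : Set E} {φ : E →L[ℝ] ℝ} (hφ : φ ≠ 0) (hK : ∀ k ∈ K, 0 ≤ φ k)
    {k : E} (hk : k ∈ interior K) : 0 < φ k := by
  refine lt_of_le_of_ne (hK k (interior_subset hk)) fun h0 => hφ ?_
  -- Otherwise `k` is a local minimum of `φ`, so the derivative `φ` vanishes.
  have hmin : IsLocalMin φ k := by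
    filter_upwards [mem_interior_iff_mem_nhds.1 hk] with x hx
    rw [← h0]
    exact hK x hx
  exact hmin.hasFDerivAt_eq_zero φ.hasFDerivAt

section Separation

variable {X Y Z : Type*} [NormedAddCommGroup Y] [NormedSpace ℝ Y]
  [NormedAddCommGroup Z] [NormedSpace ℝ Z]
  {Ω : Set X} {f : X → Y} {g : X → Z} {Yp : Set Y} {Zp : Set Z} {y₀ : Y}
  {h : (Z × Y) →L[ℝ] ℝ}

theorem map_prod_eq (h : (Z × Y) →L[ℝ] ℝ) (z : Z) (y : Y) : h (z, y) = h (z, 0) + h (0, y) := by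
  rw [← map_add]
  simp

theorem sepSet_nonneg_right (hZp : IsConvexCone Zp) (hh : h ∈ SepSet Ω f g Yp Zp y₀)
    {y : Y} (hy : y ∈ Yp) : 0 ≤ h (0, y) := by
  have h1 := hh.2.1 0 hZp.zero_mem y hy
  have h2 : ((-0 : Z), y₀ - y) = (0, y₀) - (0, y) := by simp
  rw [h2, map_sub] at h1
  linarith

theorem sepSet_nonneg_left (hYp : IsConvexCone Yp) (hh : h ∈ SepSet Ω f g Yp Zp y₀)
    {z : Z} (hz : z ∈ Zp) : 0 ≤ h (z, 0) := by
  have h1 := hh.2.1 z hz 0 hYp.zero_mem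
  have h2 : (-z, y₀ - (0 : Y)) = (0, y₀) - (z, 0) := by simp
  rw [h2, map_sub] at h1
  linarith

theorem map_neg_left (h : (Z × Y) →L[ℝ] ℝ) (z : Z) : h (-z, 0) = -h (z, 0) := by
  rw [← map_neg]
  simp

theorem map_neg_right (h : (Z × Y) →L[ℝ] ℝ) (y : Y) : h (0, -y) = -h (0, y) := by
  rw [← map_neg]
  simp

theorem sepSet_le (hYp : IsConvexCone Yp) (hZp : IsConvexCone Zp)
    (hh : h ∈ SepSet Ω f g Yp Zp y₀) {x : X} (hx : x ∈ Ω) :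
    h (0, y₀) ≤ h (g x, 0) + h (0, f x) := by
  rw [← map_prod_eq]
  exact hh.2.2 _ ⟨x, hx, 0, hZp.zero_mem, 0, hYp.zero_mem, by simp⟩

/-- Under the Slater condition, a separating functional that is positive at the nonzero boundary
points of `Yp` is positive at every nonzero point of `Yp`. -/
theorem sepSet_pos (hYp : IsConvexCone Yp) (hZp : IsConvexCone Zp)
    (hslater : ∃ x₁ ∈ Ω, -g x₁ ∈ interior Zp) (hh : h ∈ SepSet Ω f g Yp Zp y₀)
    (hfr : ∀ y ∈ frontier Yp, y ≠ 0 → 0 < h (0, y)) {y : Y} (hy : y ∈ Yp) (hy0 : y ≠ 0) :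
    0 < h (0, y) := by
  by_cases hi : y ∈ interior Yp
  · refine pos_of_mem_interior (φ := h.comp (ContinuousLinearMap.inr ℝ Z Y)) ?_
      (fun k hk => sepSet_nonneg_right hZp hh hk) hi
    -- If the `Y`-part were zero, the `Z`-part would be nonzero, hence negative at the Slater
    -- value `g x₁`, against separation.
    intro hr
    have hr' : ∀ y, h (0, y) = 0 := fun y => by simpa using DFunLike.congr_fun hr y
    have hl : h.comp (ContinuousLinearMap.inl ℝ Z Y) ≠ 0 := by
      intro hl
      apply hh.1
      ext p
      · simpa using DFunLike.congr_fun hl p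
      · simpa using hr' p
    obtain ⟨x, hx, hgx⟩ := hslater
    have h1 : 0 < h (-g x, 0) := pos_of_mem_interior hl
      (fun k hk => sepSet_nonneg_left hYp hh hk) hgx
    have h2 := sepSet_le hYp hZp hh hx
    rw [hr', hr'] at h2
    rw [map_neg_left] at h1
    linarith
  · exact hfr y ⟨subset_closure hy, hi⟩ hy0

/-- Dual feasibility in scalar form: `y ∈ L_h(z)` forces `ζ z ≤ φ y`, where `h = (ζ, φ)`. -/
theorem le_of_mem_graphLh (hZp : IsConvexCone Zp) (hh : h ∈ SepSet Ω f g Yp Zp y₀)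
    {z : Z} {y : Y} (hzy : (z, y) ∈ GraphLh Yp h) : h (z, 0) ≤ h (0, y) := by
  obtain ⟨y', h1, h2⟩ := hzy
  have h3 := sepSet_nonneg_right hZp hh h2
  have h4 : ((0 : Z), y - y') = (0, y) - (0, y') := by simp
  rw [h4, map_sub] at h3
  rw [map_prod_eq, map_neg_right] at h1
  simp only at h1
  linarith

end Separation

/-- A point minimizing, over `A`, a functional that is positive on `Yp \ {0}` is a minimal
point of `A`. -/
theorem isMinimalPt_of_pos {Y : Type*} [AddCommGroup Y] [Module ℝ Y] {Yp A : Set Y} {a : Y}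
    (h0 : (0 : Y) ∈ Yp) (φ : Y →ₗ[ℝ] ℝ) (hφ : ∀ y ∈ Yp, y ≠ 0 → 0 < φ y) (ha : a ∈ A)
    (hA : ∀ y ∈ A, φ a ≤ φ y) : IsMinimalPt Yp A a := by
  refine ⟨ha, fun y hy hay => ?_⟩
  have : a - y = 0 := by
    by_contra hne
    have h1 := hφ _ hay hne
    have h2 := hA y hy
    rw [map_sub] at h1
    linarith
  rw [← neg_sub, this, neg_zero]
  exact h0

theorem stmt_17
    {X Y Z : Type*}
    [NormedAddCommGroup X] [NormedSpace ℝ X]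
    [NormedAddCommGroup Y] [NormedSpace ℝ Y]
    [NormedAddCommGroup Z] [NormedSpace ℝ Z]
    (Yp : Set Y) (Zp : Set Z)
    (hYp : IsConvexCone Yp) (hZp : IsConvexCone Zp)
    (hYpInt : (interior Yp).Nonempty) (hZpInt : (interior Zp).Nonempty)
    (Ω : Set X) (hΩ : Convex ℝ Ω)
    (f : X → Y) (g : X → Z)
    (hf : ∀ u ∈ Ω, ∀ v ∈ Ω, ∀ t : ℝ, t ∈ Set.Icc (0:ℝ) 1 →
      t • f u + (1 - t) • f v - f (t • u + (1 - t) • v) ∈ Yp)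
    (hg : ∀ u ∈ Ω, ∀ v ∈ Ω, ∀ t : ℝ, t ∈ Set.Icc (0:ℝ) 1 →
      t • g u + (1 - t) • g v - g (t • u + (1 - t) • v) ∈ Zp)
    (hslater : ∃ x₁ ∈ Ω, -g x₁ ∈ interior Zp)
    (y₀ : Y) (hy₀ : y₀ ∈ W0 Ω f g Zp)
    (hh₀ : ∃ h₀ ∈ SepSet Ω f g Yp Zp y₀,
      ∀ y ∈ frontier Yp, y ≠ 0 → 0 < h₀ (0, y)) :
    IsMinimalPt Yp (W0 Ω f g Zp) y₀ ↔
      IsMinimalPt Yp (DSet Ω f g (GraphLag Ω f g Yp Zp y₀)) y₀ := by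
  obtain ⟨h₀, hh, hfr⟩ := hh₀
  have hpos : ∀ y ∈ Yp, y ≠ 0 → 0 < (h₀.comp (ContinuousLinearMap.inr ℝ Z Y)).toLinearMap y :=
    fun y hy hy0 => sepSet_pos hYp hZp hslater hh hfr hy hy0
  refine iff_of_true (isMinimalPt_of_pos hYp.zero_mem _ hpos hy₀ ?_)
    (isMinimalPt_of_pos hYp.zero_mem _ hpos ?_ ?_)
  · rintro y ⟨x, hx, hgx, rfl⟩
    change h₀ (0, y₀) ≤ h₀ (0, f x)
    have h1 := sepSet_nonneg_left hYp hh hgx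
    rw [map_neg_left] at h1
    have h2 := sepSet_le hYp hZp hh hx
    linarith
  · obtain ⟨x, hx, hgx, hy⟩ := hy₀
    refine ⟨x, hx, 0, ?_, by simp [hy]⟩
    rw [GraphLag, if_pos ⟨h₀, hh⟩]
    refine Set.mem_iInter₂.2 fun h hS => ⟨0, ?_, by simpa using hYp.zero_mem⟩
    -- Complementary slackness at `x`.
    have h1 := sepSet_nonneg_left hYp hS hgx
    rw [map_neg_left] at h1
    have h2 := sepSet_le hYp hZp hS hx
    rw [← hy] at h2
    rw [neg_zero]
    change h (g x, 0) = 0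
    linarith
  · rintro y ⟨x, hx, y', hy', rfl⟩
    change h₀ (0, y₀) ≤ h₀ (0, f x + y')
    rw [GraphLag, if_pos ⟨h₀, hh⟩] at hy'
    have h1 := le_of_mem_graphLh hZp hh (Set.mem_iInter₂.1 hy' h₀ hh)
    have h2 := sepSet_le hYp hZp hh hx
    have h3 : ((0 : Z), f x + y') = (0, f x) + (0, y') := by simp
    rw [h3, map_add]
    linarith


end
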